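/- For every continuous 2π-periodic function f, the convolutions (A_ε * f)(x) := ∫_0^{2π} A_ε(x - t) f(t) dt converge uniformly on ℝ to f as ε → 0⁺. -/

import Mathlib

open Real Filter

/-- The kernel `A_ε(x) = (1/(2π)) ∑_{j ∈ ℤ} e^{ijx}/cosh(εj)`. -/
noncomputable def Aker (ε x : ℝ) : ℂ :=
  (1/(2*π : ℂ)) * ∑' j : ℤ, Complex.exp (Complex.I * j * x) / (Real.cosh (ε * j) : ℂ)

/-!
The sequence `a j = 1 / cosh (ε j)` satisfies `a (j - 1) + a (j + 1) ≤ 2 cosh ε · a j`, because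
`cosh (u - ε) cosh (u + ε) ≥ cosh² u`. Multiplying `∑ a j e^{ijx}` by `2 cosh ε - 2 cos x` replaces
its coefficients by the nonnegative gaps in this inequality, so the modulus of the product is
largest at `x = 0`. The sequence `e^{-ε|j|}` turns the inequality into an equality for `j ≠ 0`,
which sums its series to the Poisson kernel `sinh ε / (cosh ε - cos x)`. Since
`1 / cosh u ≤ 2 e^{-|u|}`, comparing the two series at `x = 0` gives `|2π A_ε| ≤ 2 P_ε` everywhere,
where `P_ε` is the Poisson kernel. Hence `A_ε` has mass one, bounded `L¹` norm, and tends to zero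
uniformly away from the origin: it is an approximate identity.
-/

open MeasureTheory Set Topology

section ApproxIdentity

variable {ι G 𝕜 E : Type*} [RCLike 𝕜] [NormedAddCommGroup E] [NormedSpace ℝ E]
  [NormedSpace 𝕜 E] [CompleteSpace E]

/-- An approximate identity along the filter `l`: a family of kernels `K i` whose integrals tend to
`1`, whose `L¹` norms are bounded, and whose `L¹` mass concentrates at `0`. A separate `μ` lets
kernels on the circle be treated as kernels on `ℝ`, with `μ` Lebesgue measure on one period. -/
structure IsApproxIdentity [Zero G] [TopologicalSpace G] [MeasurableSpace G]
    (K : ι → G → 𝕜) (l : Filter ι) (μ : Measure G) : Prop where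
  integrable : ∀ᶠ i in l, Integrable (K i) μ
  tendsto_integral : Tendsto (fun i ↦ ∫ s, K i s ∂μ) l (𝓝 1)
  norm_bounded : ∃ C, ∀ᶠ i in l, ∫ s, ‖K i s‖ ∂μ ≤ C
  tendsto_tail : ∀ U ∈ 𝓝 (0 : G), Tendsto (fun i ↦ ∫ s in Uᶜ, ‖K i s‖ ∂μ) l (𝓝 0)

lemma norm_integral_smul_sub_le {α : Type*} [MeasurableSpace α] {μ : Measure α} {k : α → 𝕜}
    {g : α → E} {y : E} {U : Set α} {M η : ℝ} (hk : Integrable k μ) (hg : AEStronglyMeasurable g μ)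
    (hU : MeasurableSet U) (hη : 0 ≤ η) (hgM : ∀ s, ‖g s‖ ≤ M) (hyM : ‖y‖ ≤ M)
    (hgy : ∀ s ∈ U, ‖g s - y‖ ≤ η) :
    ‖(∫ s, k s • g s ∂μ) - y‖ ≤
      η * ∫ s, ‖k s‖ ∂μ + 2 * M * ∫ s in Uᶜ, ‖k s‖ ∂μ + ‖(∫ s, k s ∂μ) - 1‖ * M := by
  have hdiff (s : α) : ‖k s • (g s - y)‖ ≤ η * ‖k s‖ + 2 * M * Uᶜ.indicator (‖k ·‖) s := by
    rw [norm_smul, mul_comm]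
    by_cases hs : s ∈ U
    · simpa [hs] using mul_le_mul_of_nonneg_right (hgy s hs) (norm_nonneg (k s))
    · have hsub : ‖g s - y‖ ≤ 2 * M := by linarith [norm_sub_le (g s) y, hgM s]
      rw [indicator_of_mem (mem_compl hs), ← add_mul]
      gcongr
      linarith
  have hkg : Integrable (fun s ↦ k s • g s) μ := hk.smul_bdd M hg (.of_forall hgM)
  have hsplit : (∫ s, k s • g s ∂μ) - y =
      (∫ s, k s • (g s - y) ∂μ) + ((∫ s, k s ∂μ) - 1) • y := by
    simp_rw [smul_sub]
    rw [integral_sub hkg (hk.smul_const y), integral_smul_const, sub_smul, one_smul]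
    abel
  have hind : Integrable (Uᶜ.indicator (‖k ·‖)) μ := hk.norm.indicator hU.compl
  calc ‖(∫ s, k s • g s ∂μ) - y‖
      ≤ ‖∫ s, k s • (g s - y) ∂μ‖ + ‖((∫ s, k s ∂μ) - 1) • y‖ := hsplit ▸ norm_add_le _ _
    _ ≤ (∫ s, (η * ‖k s‖ + 2 * M * Uᶜ.indicator (‖k ·‖) s) ∂μ) + ‖(∫ s, k s ∂μ) - 1‖ * M := by
        rw [norm_smul]
        gcongr
        exact norm_integral_le_of_norm_le ((hk.norm.const_mul η).add (hind.const_mul (2 * M)))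
          (.of_forall hdiff)
    _ = _ := by
        rw [integral_add (hk.norm.const_mul η) (hind.const_mul (2 * M)), integral_const_mul,
          integral_const_mul, integral_indicator hU.compl]

lemma eventually_forall_dist_sub_lt_of_uniformContinuous {α : Type*} [PseudoMetricSpace α]
    [AddCommGroup G] [UniformSpace G] [IsUniformAddGroup G] {f : G → α} (hf : UniformContinuous f)
    {η : ℝ} (hη : 0 < η) : ∀ᶠ s in 𝓝 0, ∀ x, dist (f (x - s)) (f x) < η := by
  have h := hf (Metric.dist_mem_uniformity hη)
  rw [mem_map, uniformity_eq_comap_nhds_zero, mem_comap] at h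
  obtain ⟨V, hV, hVf⟩ := h
  filter_upwards [hV] with s hs x
  exact hVf (show (x - s, x).2 - (x - s, x).1 ∈ V by simpa using hs)

theorem IsApproxIdentity.tendstoUniformly [AddCommGroup G] [UniformSpace G] [IsUniformAddGroup G]
    [MeasurableSpace G] [BorelSpace G] [SecondCountableTopologyEither G E] {K : ι → G → 𝕜}
    {l : Filter ι} {μ : Measure G} (hK : IsApproxIdentity K l μ) {f : G → E}
    (hf : UniformContinuous f) (hfb : Bornology.IsBounded (range f)) :
    TendstoUniformly (fun i x ↦ ∫ s, K i s • f (x - s) ∂μ) f l := by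
  obtain ⟨M, hM⟩ := hfb.exists_norm_le
  replace hM (x : G) : ‖f x‖ ≤ M := hM _ (mem_range_self x)
  obtain ⟨C, hC⟩ := hK.norm_bounded
  rw [Metric.tendstoUniformly_iff]
  intro r hr
  obtain ⟨η, hη, hηr⟩ := exists_pos_mul_lt hr C
  obtain ⟨U, hUf, hUo, hU0⟩ := mem_nhds_iff.1
    (eventually_forall_dist_sub_lt_of_uniformContinuous hf hη)
  have hmass : Tendsto (fun i ↦ ‖(∫ s, K i s ∂μ) - 1‖) l (𝓝 0) :=
    tendsto_iff_norm_sub_tendsto_zero.1 hK.tendsto_integral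
  have hlim : Tendsto (fun i ↦ C * η + 2 * M * (∫ s in Uᶜ, ‖K i s‖ ∂μ) +
      ‖(∫ s, K i s ∂μ) - 1‖ * M) l (𝓝 (C * η)) := by
    simpa using (((hK.tendsto_tail U (hUo.mem_nhds hU0)).const_mul (2 * M)).const_add
      (C * η)).add (hmass.mul_const M)
  filter_upwards [hK.integrable, hC, hlim.eventually_lt_const hηr] with i hi hCi hlt x
  have hmeas : AEStronglyMeasurable (fun s ↦ f (x - s)) μ :=
    (hf.continuous.comp (continuous_const.sub continuous_id)).aestronglyMeasurable
  have hnear (s : G) (hs : s ∈ U) : ‖f (x - s) - f x‖ ≤ η := by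
    simpa only [dist_eq_norm] using (hUf hs x).le
  calc dist (f x) (∫ s, K i s • f (x - s) ∂μ)
      = ‖(∫ s, K i s • f (x - s) ∂μ) - f x‖ := by rw [dist_comm, dist_eq_norm]
    _ ≤ η * ∫ s, ‖K i s‖ ∂μ + 2 * M * ∫ s in Uᶜ, ‖K i s‖ ∂μ + ‖(∫ s, K i s ∂μ) - 1‖ * M :=
        norm_integral_smul_sub_le hi hmeas hUo.measurableSet hη.le (fun _ ↦ hM _) (hM x) hnear
    _ ≤ C * η + 2 * M * ∫ s in Uᶜ, ‖K i s‖ ∂μ + ‖(∫ s, K i s ∂μ) - 1‖ * M := by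
        rw [mul_comm C]
        gcongr
    _ < r := hlt

end ApproxIdentity

section TrigSeries

open Complex (I)

variable {a : ℤ → ℂ}

/-- The trigonometric series `∑ a j e^{ijx}` with coefficients `a`, with junk value `0` where it
does not converge absolutely. -/
noncomputable def trigSeries (a : ℤ → ℂ) (x : ℝ) : ℂ :=
  ∑' j : ℤ, Complex.exp (I * j * x) * a j

lemma norm_exp_I_mul_int_mul_mul (j : ℤ) (x : ℝ) (z : ℂ) :
    ‖Complex.exp (I * j * x) * z‖ = ‖z‖ := by
  have hexp : ‖Complex.exp (I * j * x)‖ = 1 := by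
    simpa [mul_assoc] using Complex.norm_exp_I_mul_ofReal (j * x)
  rw [norm_mul, hexp, one_mul]

lemma hasSum_trigSeries (ha : Summable a) (x : ℝ) :
    HasSum (fun j : ℤ ↦ Complex.exp (I * j * x) * a j) (trigSeries a x) :=
  (Summable.of_norm_bounded ha.norm fun j ↦ (norm_exp_I_mul_int_mul_mul j x _).le).hasSum

lemma norm_trigSeries_le (ha : Summable a) (x : ℝ) : ‖trigSeries a x‖ ≤ ∑' j, ‖a j‖ :=
  tsum_of_norm_bounded ha.norm.hasSum fun j ↦ (norm_exp_I_mul_int_mul_mul j x _).le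

lemma continuous_trigSeries (ha : Summable a) : Continuous (trigSeries a) :=
  continuous_tsum (fun j ↦ by fun_prop) ha.norm fun j x ↦ (norm_exp_I_mul_int_mul_mul j x _).le

lemma exp_I_mul_int_mul_periodic (j : ℤ) :
    Function.Periodic (fun x : ℝ ↦ Complex.exp (I * j * x)) (2 * π) := fun x ↦
  Complex.exp_eq_exp_iff_exists_int.2 ⟨j, by push_cast; ring⟩

lemma trigSeries_periodic (a : ℤ → ℂ) : Function.Periodic (trigSeries a) (2 * π) := fun x ↦
  tsum_congr fun j ↦ congrArg (· * a j) (exp_I_mul_int_mul_periodic j x)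

lemma integral_exp_I_mul_int_mul (j : ℤ) :
    ∫ x in -π..π, Complex.exp (I * j * x) = if j = 0 then 2 * π else 0 := by
  split_ifs with hj
  · simp [hj, two_mul]
  · have hper : Complex.exp (I * j * π) = Complex.exp (I * j * (-π : ℝ)) := by
      convert exp_I_mul_int_mul_periodic j (-π) using 4
      ring
    rw [integral_exp_mul_complex (by simp [hj]), hper, sub_self, zero_div, Complex.ofReal_zero]

lemma integral_trigSeries (ha : Summable a) : ∫ x in -π..π, trigSeries a x = 2 * π * a 0 := by
  have hsum : HasSum (fun j : ℤ ↦ ∫ x in -π..π, Complex.exp (I * j * x) * a j)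
      (∫ x in -π..π, trigSeries a x) :=
    intervalIntegral.hasSum_integral_of_dominated_convergence (fun j _ ↦ ‖a j‖)
      (fun j ↦ (by fun_prop : Continuous _).aestronglyMeasurable)
      (fun j ↦ .of_forall fun x _ ↦ (norm_exp_I_mul_int_mul_mul j x _).le)
      (.of_forall fun _ _ ↦ ha.norm) intervalIntegrable_const
      (.of_forall fun x _ ↦ hasSum_trigSeries ha x)
  simp only [intervalIntegral.integral_mul_const, integral_exp_I_mul_int_mul] at hsum
  rw [← hsum.tsum_eq, tsum_eq_single 0 fun j hj ↦ by simp [hj]]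
  simp

lemma trigSeries_shift (a : ℤ → ℂ) (k : ℤ) (x : ℝ) :
    trigSeries (fun j ↦ a (j + k)) x = Complex.exp (-(I * k * x)) * trigSeries a x := by
  rw [trigSeries, trigSeries, ← tsum_mul_left,
    ← (Equiv.addRight k).tsum_eq fun j : ℤ ↦
      Complex.exp (-(I * k * x)) * (Complex.exp (I * j * x) * a j)]
  refine tsum_congr fun j ↦ ?_
  rw [Equiv.coe_addRight, ← mul_assoc, ← Complex.exp_add]
  congr 2
  push_cast
  ring

lemma sub_two_mul_cos_mul_trigSeries (ha : Summable a) (c : ℂ) (x : ℝ) :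
    (c - 2 * Real.cos x) * trigSeries a x =
      trigSeries (fun j ↦ c * a j - (a (j + 1) + a (j + -1))) x := by
  have hshift (k : ℤ) := hasSum_trigSeries ((Equiv.addRight k).summable_iff.2 ha) x
  have hsum := ((hasSum_trigSeries ha x).mul_left c).sub ((hshift 1).add (hshift (-1)))
  have hcos : (2 * Real.cos x : ℂ) =
      Complex.exp (-(I * (1 : ℤ) * x)) + Complex.exp (-(I * (-1 : ℤ) * x)) := by
    push_cast [Complex.cos]
    ring_nf
  calc (c - 2 * Real.cos x) * trigSeries a x
      = c * trigSeries a x - (trigSeries (fun j ↦ a (j + 1)) x +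
          trigSeries (fun j ↦ a (j + -1)) x) := by
        rw [hcos, trigSeries_shift, trigSeries_shift]; ring
    _ = _ := hsum.tsum_eq.symm.trans <| tsum_congr fun j ↦ by
        simp only [Function.comp_apply, Equiv.coe_addRight]; ring

lemma mul_norm_trigSeries_le_of_add_le {b : ℤ → ℝ} {c : ℝ} (hb : Summable b) (hc : 2 ≤ c)
    (hbc : ∀ j, b (j + 1) + b (j + -1) ≤ c * b j) (x : ℝ) :
    (c - 2 * Real.cos x) * ‖trigSeries (fun j ↦ b j) x‖ ≤ (c - 2) * ∑' j, b j := by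
  have hshift (k : ℤ) : HasSum (fun j ↦ b (j + k)) (∑' j, b j) :=
    (Equiv.addRight k).hasSum_iff.2 hb.hasSum
  have hgap : HasSum (fun j ↦ c * b j - (b (j + 1) + b (j + -1))) ((c - 2) * ∑' j, b j) := by
    simpa only [sub_mul, two_mul] using (hb.hasSum.mul_left c).sub ((hshift 1).add (hshift (-1)))
  have hcos : 0 ≤ c - 2 * Real.cos x := by linarith [Real.cos_le_one x]
  calc (c - 2 * Real.cos x) * ‖trigSeries (fun j ↦ b j) x‖
      = ‖((c : ℂ) - 2 * Real.cos x) * trigSeries (fun j ↦ b j) x‖ := by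
        rw [norm_mul, ← Real.norm_of_nonneg hcos, ← Complex.norm_real]; push_cast; rfl
    _ = ‖trigSeries (fun j ↦ ((c * b j - (b (j + 1) + b (j + -1)) : ℝ) : ℂ)) x‖ := by
        rw [sub_two_mul_cos_mul_trigSeries (Complex.summable_ofReal.2 hb)]; push_cast; rfl
    _ ≤ ∑' j, ‖((c * b j - (b (j + 1) + b (j + -1)) : ℝ) : ℂ)‖ :=
        norm_trigSeries_le (Complex.summable_ofReal.2 hgap.summable) x
    _ = (c - 2) * ∑' j, b j := by
        rw [← hgap.tsum_eq]
        exact tsum_congr fun j ↦ by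
          rw [Complex.norm_real, Real.norm_of_nonneg (sub_nonneg.2 (hbc j))]

end TrigSeries

section Poisson

/-- The Poisson kernel `(1 - r²) / (1 - 2 r cos x + r²)` of the unit disc at radius `r = e^{-ε}`,
written with hyperbolic functions of `ε`. -/
noncomputable def circlePoissonKernel (ε x : ℝ) : ℝ :=
  sinh ε / (cosh ε - cos x)

variable {ε : ℝ}

lemma cosh_sub_cos_pos (hε : ε ≠ 0) (x : ℝ) : 0 < cosh ε - cos x :=
  sub_pos.2 ((cos_le_one x).trans_lt (one_lt_cosh.2 hε))

lemma continuous_circlePoissonKernel (hε : ε ≠ 0) : Continuous (circlePoissonKernel ε) :=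
  continuous_const.div (by fun_prop) fun x ↦ (cosh_sub_cos_pos hε x).ne'

lemma summable_exp_neg_mul_abs_int (hε : 0 < ε) : Summable fun j : ℤ ↦ rexp (-(ε * |(j : ℝ)|)) := by
  have hnat : Summable fun n : ℕ ↦ rexp (-(ε * n)) := by
    simpa [mul_comm] using summable_exp_nat_mul_iff.2 (neg_lt_zero.2 hε)
  exact .of_nat_of_neg (by simpa using hnat) (by simpa using hnat)

lemma exp_neg_mul_abs_int_second_difference (ε : ℝ) (j : ℤ) :
    2 * cosh ε * rexp (-(ε * |(j : ℝ)|)) -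
        (rexp (-(ε * |((j + 1 : ℤ) : ℝ)|)) + rexp (-(ε * |((j + -1 : ℤ) : ℝ)|))) =
      if j = 0 then 2 * sinh ε else 0 := by
  have hexp (u : ℝ) : 2 * cosh ε * rexp (-u) = rexp (-(u + ε)) + rexp (-(u - ε)) := by
    rw [cosh_eq, neg_add, neg_sub', sub_neg_eq_add, Real.exp_add, Real.exp_add]; ring
  rw [hexp]
  push_cast
  rcases lt_trichotomy j 0 with hj | rfl | hj
  · have hj' : (j : ℝ) ≤ -1 := by exact_mod_cast Int.le_sub_one_of_lt hj
    rw [if_neg hj.ne, abs_of_nonpos (by linarith), abs_of_nonpos (by linarith),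
      abs_of_nonpos (by linarith)]
    ring_nf
  · simp only [Int.cast_zero, abs_zero, mul_zero, zero_add, zero_sub, neg_neg, abs_one, mul_one,
      abs_neg, ↓reduceIte, sinh_eq]
    ring
  · have hj' : 1 ≤ (j : ℝ) := by exact_mod_cast hj
    rw [if_neg hj.ne', abs_of_nonneg (by linarith), abs_of_nonneg (by linarith),
      abs_of_nonneg (by linarith)]
    ring_nf

lemma trigSeries_exp_neg_mul_abs (hε : 0 < ε) (x : ℝ) :
    trigSeries (fun j ↦ rexp (-(ε * |(j : ℝ)|))) x = circlePoissonKernel ε x := by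
  have hgap := sub_two_mul_cos_mul_trigSeries
    (Complex.summable_ofReal.2 (summable_exp_neg_mul_abs_int hε)) (2 * cosh ε : ℝ) x
  simp only [← Complex.ofReal_mul, ← Complex.ofReal_add, ← Complex.ofReal_sub,
    exp_neg_mul_abs_int_second_difference] at hgap
  have hsingle : trigSeries (fun j ↦ ((if j = 0 then 2 * sinh ε else 0 : ℝ) : ℂ)) x =
      (2 * sinh ε : ℝ) := by
    rw [trigSeries, tsum_eq_single 0 fun j hj ↦ by simp [hj]]
    simp
  rw [hsingle] at hgap
  have hpos : ((cosh ε - cos x : ℝ) : ℂ) ≠ 0 :=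
    Complex.ofReal_ne_zero.2 (cosh_sub_cos_pos hε.ne' x).ne'
  rw [circlePoissonKernel, Complex.ofReal_div, eq_div_iff hpos]
  push_cast at hgap ⊢
  linear_combination hgap / 2

lemma tsum_exp_neg_mul_abs_int (hε : 0 < ε) :
    ∑' j : ℤ, rexp (-(ε * |(j : ℝ)|)) = circlePoissonKernel ε 0 := by
  have h := trigSeries_exp_neg_mul_abs hε 0
  simp only [trigSeries, Complex.ofReal_zero, mul_zero, Complex.exp_zero, one_mul,
    ← Complex.ofReal_tsum] at h
  exact_mod_cast h

lemma integral_circlePoissonKernel (hε : 0 < ε) :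
    ∫ x in -π..π, circlePoissonKernel ε x = 2 * π := by
  have h := integral_trigSeries (Complex.summable_ofReal.2 (summable_exp_neg_mul_abs_int hε))
  simp only [trigSeries_exp_neg_mul_abs hε, intervalIntegral.integral_ofReal, Int.cast_zero,
    abs_zero, mul_zero, neg_zero, Real.exp_zero, Complex.ofReal_one, mul_one] at h
  exact_mod_cast h

end Poisson

section InvCosh

variable {ε : ℝ}

lemma inv_cosh_le_two_mul_exp_neg_abs (u : ℝ) : (cosh u)⁻¹ ≤ 2 * rexp (-|u|) := by
  have h : rexp |u| / 2 ≤ cosh u := by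
    rw [cosh_eq]; gcongr; exact exp_abs_le u
  calc (cosh u)⁻¹ ≤ (rexp |u| / 2)⁻¹ := by gcongr
    _ = 2 * rexp (-|u|) := by rw [inv_div, Real.exp_neg, div_eq_mul_inv]

lemma inv_cosh_add_add_inv_cosh_sub_le (u v : ℝ) :
    (cosh (u + v))⁻¹ + (cosh (u - v))⁻¹ ≤ 2 * cosh v * (cosh u)⁻¹ := by
  have hprod : cosh u ^ 2 ≤ cosh (u + v) * cosh (u - v) := by
    have : cosh (u + v) * cosh (u - v) = cosh u ^ 2 + sinh v ^ 2 := by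
      rw [cosh_add, cosh_sub]
      linear_combination cosh u ^ 2 * cosh_sq v + sinh v ^ 2 * cosh_sq u
    linarith [sq_nonneg (sinh v)]
  have hsum : cosh (u + v) + cosh (u - v) = 2 * cosh v * cosh u := by
    rw [cosh_add, cosh_sub]; ring
  calc (cosh (u + v))⁻¹ + (cosh (u - v))⁻¹
      = 2 * cosh v * cosh u / (cosh (u + v) * cosh (u - v)) := by
        rw [inv_add_inv (cosh_pos _).ne' (cosh_pos _).ne', hsum]
    _ ≤ 2 * cosh v * cosh u / cosh u ^ 2 := by gcongr
    _ = 2 * cosh v * (cosh u)⁻¹ := by field_simp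

lemma inv_cosh_mul_int_le (hε : 0 < ε) (j : ℤ) :
    (cosh (ε * j))⁻¹ ≤ 2 * rexp (-(ε * |(j : ℝ)|)) := by
  simpa [abs_mul, abs_of_pos hε] using inv_cosh_le_two_mul_exp_neg_abs (ε * j)

lemma summable_inv_cosh_mul_int (hε : 0 < ε) : Summable fun j : ℤ ↦ (cosh (ε * j))⁻¹ :=
  .of_nonneg_of_le (fun _ ↦ (inv_pos.2 (cosh_pos _)).le) (inv_cosh_mul_int_le hε)
    ((summable_exp_neg_mul_abs_int hε).mul_left 2)

lemma tsum_inv_cosh_mul_int_le (hε : 0 < ε) :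
    ∑' j : ℤ, (cosh (ε * j))⁻¹ ≤ 2 * circlePoissonKernel ε 0 := by
  rw [← tsum_exp_neg_mul_abs_int hε, ← tsum_mul_left]
  exact (summable_inv_cosh_mul_int hε).tsum_le_tsum (inv_cosh_mul_int_le hε)
    ((summable_exp_neg_mul_abs_int hε).mul_left 2)

lemma norm_trigSeries_inv_cosh_le (hε : 0 < ε) (x : ℝ) :
    ‖trigSeries (fun j ↦ ((cosh (ε * j))⁻¹ : ℝ)) x‖ ≤ 2 * circlePoissonKernel ε x := by
  have hgap (j : ℤ) : (cosh (ε * (j + 1 : ℤ)))⁻¹ + (cosh (ε * (j + -1 : ℤ)))⁻¹ ≤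
      2 * cosh ε * (cosh (ε * j))⁻¹ := by
    convert inv_cosh_add_add_inv_cosh_sub_le (ε * j) ε using 4 <;> push_cast <;> ring
  have hmax := mul_norm_trigSeries_le_of_add_le (summable_inv_cosh_mul_int hε)
    (by linarith [one_le_cosh ε]) hgap x
  have hzero : 0 < cosh ε - 1 := sub_pos.2 (one_lt_cosh.2 hε.ne')
  have hsum : (cosh ε - 1) * ∑' j : ℤ, (cosh (ε * j))⁻¹ ≤ 2 * sinh ε :=
    calc (cosh ε - 1) * ∑' j : ℤ, (cosh (ε * j))⁻¹
        ≤ (cosh ε - 1) * (2 * circlePoissonKernel ε 0) := by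
          gcongr; exact tsum_inv_cosh_mul_int_le hε
      _ = 2 * sinh ε := by rw [circlePoissonKernel, cos_zero]; field_simp
  rw [circlePoissonKernel, ← mul_div_assoc, le_div_iff₀ (cosh_sub_cos_pos hε.ne' x)]
  linarith

end InvCosh

section Aker

variable {ε : ℝ}

lemma Aker_eq_trigSeries (ε x : ℝ) :
    Aker ε x = (2 * π : ℂ)⁻¹ * trigSeries (fun j ↦ ((cosh (ε * j))⁻¹ : ℝ)) x := by
  simp [Aker, trigSeries, div_eq_mul_inv]

lemma continuous_Aker (hε : 0 < ε) : Continuous (Aker ε) := by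
  rw [funext (Aker_eq_trigSeries ε)]
  exact (continuous_trigSeries
    (Complex.summable_ofReal.2 (summable_inv_cosh_mul_int hε))).const_mul _

lemma Aker_periodic (ε : ℝ) : Function.Periodic (Aker ε) (2 * π) := fun x ↦ by
  rw [Aker_eq_trigSeries, Aker_eq_trigSeries, trigSeries_periodic]

lemma integral_Aker (hε : 0 < ε) : ∫ x in -π..π, Aker ε x = 1 := by
  simp only [Aker_eq_trigSeries, intervalIntegral.integral_const_mul,
    integral_trigSeries (Complex.summable_ofReal.2 (summable_inv_cosh_mul_int hε))]
  simp only [Int.cast_zero, mul_zero, cosh_zero, inv_one, Complex.ofReal_one, mul_one]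
  exact inv_mul_cancel₀ (by simp [pi_ne_zero])

lemma norm_Aker_le (hε : 0 < ε) (x : ℝ) : ‖Aker ε x‖ ≤ π⁻¹ * circlePoissonKernel ε x := by
  have hnorm : ‖(2 * π : ℂ)⁻¹‖ = (2 * π)⁻¹ := by simp [abs_of_pos pi_pos]
  calc ‖Aker ε x‖ ≤ (2 * π)⁻¹ * (2 * circlePoissonKernel ε x) := by
        rw [Aker_eq_trigSeries, norm_mul, hnorm]
        gcongr
        exact norm_trigSeries_inv_cosh_le hε x
    _ = π⁻¹ * circlePoissonKernel ε x := by field_simp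

lemma integral_norm_Aker_le (hε : 0 < ε) : ∫ x in -π..π, ‖Aker ε x‖ ≤ 2 := by
  have hpoisson := continuous_circlePoissonKernel hε.ne'
  calc ∫ x in -π..π, ‖Aker ε x‖
      ≤ ∫ x in -π..π, π⁻¹ * circlePoissonKernel ε x :=
        intervalIntegral.integral_mono_on (by linarith [pi_pos])
          ((continuous_Aker hε).norm.intervalIntegrable _ _)
          ((hpoisson.const_mul _).intervalIntegrable _ _) fun x _ ↦ norm_Aker_le hε x
    _ = 2 := by
        rw [intervalIntegral.integral_const_mul, integral_circlePoissonKernel hε]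
        field_simp

lemma circlePoissonKernel_le_of_le_abs {δ x : ℝ} (hε : 0 < ε) (hδ : 0 < δ) (hδx : δ ≤ |x|)
    (hx : |x| ≤ π) : circlePoissonKernel ε x ≤ sinh ε / (1 - cos δ) := by
  have hcos : cos x ≤ cos δ := by
    rw [← cos_abs x]; exact cos_le_cos_of_nonneg_of_le_pi hδ.le hx hδx
  have hlt : cos δ < 1 := by
    simpa using cos_lt_cos_of_nonneg_of_le_pi le_rfl (hδx.trans hx) hδ
  have := sub_pos.2 hlt
  unfold circlePoissonKernel
  gcongr
  exact one_le_cosh ε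

lemma tendsto_setIntegral_norm_Aker_compl {U : Set ℝ} (hU : U ∈ 𝓝 0) :
    Tendsto (fun ε ↦ ∫ x in Uᶜ, ‖Aker ε x‖ ∂volume.restrict (Ioc (-π) π)) (𝓝[>] 0) (𝓝 0) := by
  obtain ⟨δ, hδ, hδU⟩ := Metric.mem_nhds_iff.1 hU
  have hbound (ε : ℝ) (hε : 0 < ε) : ∫ x in Uᶜ, ‖Aker ε x‖ ∂volume.restrict (Ioc (-π) π) ≤
      π⁻¹ * (sinh ε / (1 - cos δ)) * (volume.restrict (Ioc (-π) π)).real Uᶜ := by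
    refine (le_norm_self _).trans (norm_setIntegral_le_of_norm_le_const_ae' (measure_lt_top _ _) ?_)
    filter_upwards [ae_restrict_mem measurableSet_Ioc] with x hx hxU
    have hδx : δ ≤ |x| := by
      by_contra! h
      exact hxU (hδU (by simpa using h))
    rw [norm_norm]
    refine (norm_Aker_le hε x).trans ?_
    gcongr
    exact circlePoissonKernel_le_of_le_abs hε hδ hδx (abs_le.2 ⟨hx.1.le, hx.2⟩)
  have hlim : Tendsto (fun ε ↦ π⁻¹ * (sinh ε / (1 - cos δ)) *
      (volume.restrict (Ioc (-π) π)).real Uᶜ) (𝓝[>] 0) (𝓝 0) := by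
    exact tendsto_nhdsWithin_of_tendsto_nhds (Continuous.tendsto' (by fun_prop) _ _ (by simp))
  refine squeeze_zero' (.of_forall fun ε ↦ integral_nonneg fun x ↦ norm_nonneg _) ?_ hlim
  filter_upwards [self_mem_nhdsWithin] with ε hε using hbound ε hε

theorem isApproxIdentity_Aker :
    IsApproxIdentity Aker (𝓝[>] 0) (volume.restrict (Ioc (-π) π)) where
  integrable := by
    filter_upwards [self_mem_nhdsWithin] with ε hε using (continuous_Aker hε).integrableOn_Ioc
  tendsto_integral := by
    refine tendsto_const_nhds.congr' ?_
    filter_upwards [self_mem_nhdsWithin] with ε hε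
    rw [← intervalIntegral.integral_of_le (by linarith [pi_pos]), integral_Aker hε]
  norm_bounded := by
    refine ⟨2, ?_⟩
    filter_upwards [self_mem_nhdsWithin] with ε hε
    rw [← intervalIntegral.integral_of_le (by linarith [pi_pos])]
    exact integral_norm_Aker_le hε
  tendsto_tail _ := tendsto_setIntegral_norm_Aker_compl

end Aker

section Periodic

lemma uniformContinuous_of_continuous_of_periodic {α : Type*} [UniformSpace α] {f : ℝ → α} {T : ℝ}
    (hT : 0 < T) (hf : Continuous f) (hfT : Function.Periodic f T) : UniformContinuous f := by
  have : Fact (0 < T) := ⟨hT⟩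
  have hlift : Continuous (hfT.lift : AddCircle T → α) := continuous_coinduced_dom.2 hf
  have hmk : UniformContinuous (QuotientAddGroup.mk' (AddSubgroup.zmultiples T)) :=
    uniformContinuous_of_continuousAt_zero _ (AddCircle.continuous_mk' T).continuousAt
  exact (CompactSpace.uniformContinuous_of_continuous hlift).comp hmk

lemma intervalIntegral_smul_comp_sub_eq {𝕜 E : Type*} [NormedAddCommGroup E] [NormedSpace ℝ E]
    [SMul 𝕜 E] {k : ℝ → 𝕜} {f : ℝ → E} {T : ℝ} (hk : Function.Periodic k T)
    (hf : Function.Periodic f T) (a x : ℝ) :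
    ∫ t in 0..T, k (x - t) • f t = ∫ s in a..a + T, k s • f (x - s) := by
  have hper : Function.Periodic (fun s ↦ k s • f (x - s)) T := fun s ↦ by
    simp only [hk s, ← sub_sub, hf.sub_eq]
  calc ∫ t in 0..T, k (x - t) • f t = ∫ s in x - T..x, k s • f (x - s) := by
        simpa using intervalIntegral.integral_comp_sub_left (a := 0) (b := T)
          (fun s ↦ k s • f (x - s)) x
    _ = ∫ s in a..a + T, k s • f (x - s) := by
        simpa using hper.intervalIntegral_add_eq (x - T) a

end Periodic

theorem stmt5_general {E : Type*} [NormedAddCommGroup E] [NormedSpace ℂ E] [CompleteSpace E]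
    {f : ℝ → E} (hf : Continuous f) (hfp : Function.Periodic f (2 * π)) :
    TendstoUniformly (fun (ε x : ℝ) ↦ ∫ t in 0..2 * π, Aker ε (x - t) • f t) f (𝓝[>] 0) := by
  have hconv (ε x : ℝ) : ∫ s in Ioc (-π) π, Aker ε s • f (x - s) =
      ∫ t in 0..2 * π, Aker ε (x - t) • f t := by
    rw [intervalIntegral_smul_comp_sub_eq (Aker_periodic ε) hfp (-π),
      ← intervalIntegral.integral_of_le (by linarith [pi_pos])]
    ring_nf
  simpa only [hconv] using isApproxIdentity_Aker.tendstoUniformly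
    (uniformContinuous_of_continuous_of_periodic two_pi_pos hf hfp)
    (hfp.isBounded_of_continuous two_pi_pos.ne' hf)

theorem stmt5 (f : ℝ → ℝ) (hf : Continuous f) (hfp : Function.Periodic f (2*π)) :
    TendstoUniformly
      (fun (ε : ℝ) (x : ℝ) => ∫ t in (0:ℝ)..(2*π), Aker ε (x - t) * (f t : ℂ))
      (fun x => (f x : ℂ)) (nhdsWithin 0 (Set.Ioi 0)) :=
  stmt5_general (Complex.continuous_ofReal.comp hf) (hfp.comp Complex.ofReal)
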